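/- arXiv:2308.10546 — 2 statements merged into one kernel-verified Lean document; each statement's English description precedes it below -/
import Mathlib

section
/- Let k ≥ 2 and t ≥ 2 be integers and let G be a fixed edge-critical graph with chromatic number χ(G) = k + 1. Then there exists n₀ such that for all integers n ≥ n₀, the Ramsey number satisfies R(G, K₁ + nK_t) = k·n·t + 1. -/
open SimpleGraph

/-- `containsCopy F G` : the graph `F` contains a copy of the graph `G` (as a subgraph). -/
def containsCopy {V W : Type*} (F : SimpleGraph V) (G : SimpleGraph W) : Prop :=
  ∃ f : G →g F, Function.Injective f

/-- `arrows N G H` : every red/blue coloring of the edges of `K_N` (given by the graph `R` of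
red edges, whose complement is the graph of blue edges) contains a red copy of `G` or a
blue copy of `H`. -/
def arrows {V W : Type*} (N : ℕ) (G : SimpleGraph V) (H : SimpleGraph W) : Prop :=
  ∀ R : SimpleGraph (Fin N), containsCopy R G ∨ containsCopy Rᶜ H

/-- The Ramsey number `R(G, H)`. -/
noncomputable def ramseyNumber {V W : Type*} (G : SimpleGraph V) (H : SimpleGraph W) : ℕ :=
  sInf { N : ℕ | 0 < N ∧ arrows N G H }

/-- The generalized fan `K₁ + nK_t` : the join of a single vertex (`none`) with `n` disjoint
copies of `K_t`. -/
def genFan (n t : ℕ) : SimpleGraph (Option (Fin n × Fin t)) :=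
  SimpleGraph.fromRel (fun a b =>
    a = none ∨ ∃ p q : Fin n × Fin t, a = some p ∧ b = some q ∧ p.1 = q.1)

/-- A graph `G` is edge-critical if it has an edge `e` with `χ(G - e) = χ(G) - 1`. -/
def EdgeCritical {V : Type*} (G : SimpleGraph V) : Prop :=
  ∃ u v : V, G.Adj u v ∧ (G.deleteEdges {s(u, v)}).chromaticNumber + 1 = G.chromaticNumber

/-- `K_m ⊔ K_{1,ℓ}` : the complete graph on the `m` vertices `some i`, together with one new
vertex `none` joined to exactly the `ℓ` vertices `some i` with `i < ℓ` (for `ℓ ≤ m`). -/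
def KstarK (m ℓ : ℕ) : SimpleGraph (Option (Fin m)) :=
  SimpleGraph.fromRel (fun a b =>
    ((∃ i : Fin m, a = some i) ∧ ∃ j : Fin m, b = some j) ∨
      (a = none ∧ ∃ j : Fin m, b = some j ∧ (j : ℕ) < ℓ))

/-- `starArrows m ℓ G H` : every red/blue coloring of the edges of `K_m ⊔ K_{1,ℓ}` (the red
edges forming a subgraph `R`, the blue edges the remaining edges) contains a red copy of `G`
or a blue copy of `H`. -/
def starArrows {V W : Type*} (m ℓ : ℕ) (G : SimpleGraph V) (H : SimpleGraph W) : Prop :=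
  ∀ R : SimpleGraph (Option (Fin m)), R ≤ KstarK m ℓ →
    containsCopy R G ∨ containsCopy (KstarK m ℓ \ R) H

/-- The star-critical Ramsey number `r₊(G, H)`. -/
noncomputable def starRamsey {V W : Type*} (G : SimpleGraph V) (H : SimpleGraph W) : ℕ :=
  sInf { ℓ : ℕ | starArrows (ramseyNumber G H - 1) ℓ G H }

/-- The chromatic number of `G` as a natural number. -/
noncomputable def chromNum {V : Type*} (G : SimpleGraph V) : ℕ := G.chromaticNumber.toNat

/-- `s(G)` : the minimum size of a color class over all proper `χ(G)`-colorings of `G`. -/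
noncomputable def minClassSize {V : Type*} (G : SimpleGraph V) : ℕ :=
  sInf { m : ℕ | ∃ C : G.Coloring (Fin (chromNum G)), ∃ i : Fin (chromNum G),
    m = {v | C v = i}.ncard }

/-- `τ(G)` : the minimum, over all proper `χ(G)`-colorings of `G` having a color class `U_j`
of size `s(G)`, over all vertices `v ∈ U_j` and all other color classes `U_i`, of the number
of neighbors of `v` in `U_i`. -/
noncomputable def tauNum {V : Type*} (G : SimpleGraph V) : ℕ :=
  sInf { m : ℕ | ∃ C : G.Coloring (Fin (chromNum G)), ∃ j : Fin (chromNum G),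
    {v | C v = j}.ncard = minClassSize G ∧
    ∃ v, C v = j ∧ ∃ i : Fin (chromNum G), i ≠ j ∧ m = {u | C u = i ∧ G.Adj v u}.ncard }

/-!
The lower bound comes from `k` blocks of size `nt` with all edges between different blocks red.

For the upper bound, take a red graph `F` without `G` whose complement has no fan. As `F` has no
large clique, Ramsey's theorem lets one pack copies of `K_t` greedily into any blue neighborhood, so
every blue degree is at most `nt + O(1)`, and the minimum degree of `F` is at least
`(1 - 1/k)N - O(1)`. Such a `G`-free graph is `k`-colorable for large `N`, and then some color class
has more than `nt` vertices and carries a blue fan.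

The colorability is a stability argument. Let `uv` be the critical edge of `G`. By Erdős–Stone, `F`
contains a blow-up of `K_k` with parts `A i` of a large constant size. Since `G` does not embed,
every vertex has few neighbors in some `A i`, and two vertices with few neighbors in the same `A i`
and few non-neighbors in the other parts cannot be adjacent, as they could serve as `u` and `v`.
The degree condition bounds the number of vertices failing the second requirement by a small
multiple of `N`, so the remaining ones form `k` independent sets of size almost `N / k`. With these
linear-size sets in place of the `A i`, no vertex fails, and the same argument colors all of `F`.
-/

open Finset Filter

theorem containsCopy_iff_isContained {V W : Type*} {F : SimpleGraph W} {G : SimpleGraph V} :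
    containsCopy F G ↔ G ⊑ F :=
  ⟨fun ⟨f, hf⟩ ↦ ⟨⟨f, hf⟩⟩, fun ⟨f⟩ ↦ ⟨f.toHom, f.injective⟩⟩

section NonNeighbors

variable {W α : Type*}

open Classical in
/-- The vertices of `S` that are not adjacent to `v` in `F`. In contrast to the neighbors of `v` in
`Fᶜ`, they include `v` itself when `v ∈ S`. -/
noncomputable def nonNeighbors (F : SimpleGraph W) (S : Finset W) (v : W) : Finset W :=
  {w ∈ S | ¬ F.Adj v w}

variable {F : SimpleGraph W} {S T : Finset W} {v w : W}

@[simp]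
theorem mem_nonNeighbors : w ∈ nonNeighbors F S v ↔ w ∈ S ∧ ¬ F.Adj v w := by
  simp [nonNeighbors]

theorem nonNeighbors_subset : nonNeighbors F S v ⊆ S :=
  fun _ hw ↦ (mem_nonNeighbors.1 hw).1

theorem nonNeighbors_subset_nonNeighbors (h : S ⊆ T) : nonNeighbors F S v ⊆ nonNeighbors F T v :=
  fun _ hw ↦ mem_nonNeighbors.2 ((mem_nonNeighbors.1 hw).imp_left (@h _))

theorem sum_card_nonNeighbors_comm (F : SimpleGraph W) (S T : Finset W) :
    ∑ v ∈ T, #(nonNeighbors F S v) = ∑ w ∈ S, #(nonNeighbors F T w) := by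
  classical
  have hcomm : ∀ w, nonNeighbors F T w = T.bipartiteBelow (fun a b ↦ ¬ F.Adj a b) w := fun w ↦ by
    ext v; simp [F.adj_comm]
  simp only [hcomm, ← sum_card_bipartiteAbove_eq_sum_card_bipartiteBelow]
  rfl

theorem degree_add_card_nonNeighbors [Fintype W] [DecidableRel F.Adj] (v : W) :
    F.degree v + #(nonNeighbors F univ v) = Fintype.card W := by
  classical
  have hnon : nonNeighbors F univ v = ({w | ¬ F.Adj v w} : Finset W) := by ext; simp
  rw [← F.card_neighborFinset_eq_degree, F.neighborFinset_eq_filter, hnon,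
    card_filter_add_card_filter_not, card_univ]

/-- Every vertex in a part of the family `A` misses at most `d` vertices of each other part. -/
def NearlyMultipartite (F : SimpleGraph W) (A : α → Finset W) (d : ℕ) : Prop :=
  ∀ ⦃i j⦄, i ≠ j → ∀ a ∈ A i, #(nonNeighbors F (A j) a) ≤ d

end NonNeighbors

section Embedding

variable {V W : Type*}

/-- The map `f` embeds the part of `G` induced on `T` into `F`, sending each vertex `x ∈ T` into its
prescribed host set `S x`. -/
structure IsPartialCopy (G : SimpleGraph V) (F : SimpleGraph W) (S : V → Finset W)
    (T : Finset V) (f : V → W) : Prop where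
  mem : ∀ x ∈ T, f x ∈ S x
  injOn : Set.InjOn f T
  map_adj : ∀ x ∈ T, ∀ y ∈ T, G.Adj x y → F.Adj (f x) (f y)

namespace IsPartialCopy

variable {G : SimpleGraph V} {F : SimpleGraph W} {S : V → Finset W} {T : Finset V} {f : V → W}
  {x : V} {d : ℕ}

theorem insert [DecidableEq V] (h : IsPartialCopy G F S T f) (hx : x ∉ T) {b : W} (hbS : b ∈ S x)
    (hbT : ∀ y ∈ T, f y ≠ b) (hadj : ∀ y ∈ T, G.Adj y x → F.Adj (f y) b) :
    IsPartialCopy G F S (insert x T) (Function.update f x b) := by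
  have hne : ∀ y ∈ T, Function.update f x b y = f y := fun y hy ↦
    Function.update_of_ne (ne_of_mem_of_not_mem hy hx) _ _
  refine ⟨?_, ?_, ?_⟩
  · simpa +contextual [hne, hbS] using h.mem
  · rw [coe_insert, Set.injOn_insert (by simpa using hx)]
    refine ⟨h.injOn.congr fun y hy ↦ (hne y hy).symm, ?_⟩
    rintro ⟨y, hy, hyb⟩
    rw [hne y hy, Function.update_self] at hyb
    exact hbT y hy hyb
  · simp only [forall_mem_insert, Function.update_self]
    refine ⟨⟨fun hxx ↦ (G.irrefl hxx).elim, fun y hy hxy ↦ ?_⟩, fun y hy ↦ ⟨fun hyx ↦ ?_, ?_⟩⟩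
    · simpa only [hne y hy] using (hadj y hy hxy.symm).symm
    · simpa only [hne y hy] using hadj y hy hyx
    · intro z hz hyz
      simpa only [hne y hy, hne z hz] using h.map_adj y hy z hz hyz

theorem exists_insert [DecidableEq V] (h : IsPartialCopy G F S T f) (hx : x ∉ T)
    (hS : #T * (d + 1) < #(S x))
    (hd : ∀ y ∈ T, G.Adj y x → #(nonNeighbors F (S x) (f y)) ≤ d) :
    ∃ g, IsPartialCopy G F S (Insert.insert x T) g := by
  classical
  let missed := {y ∈ T | G.Adj y x}.biUnion fun y ↦ nonNeighbors F (S x) (f y)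
  have hmissed : #missed ≤ #T * d :=
    (card_biUnion_le_card_mul _ _ d (by simpa using hd)).trans
      (Nat.mul_le_mul_right d (card_filter_le _ _))
  have hlt : #(T.image f ∪ missed) < #(S x) := by
    have := card_union_le (T.image f) missed
    have := card_image_le (s := T) (f := f)
    lia
  obtain ⟨b, hbS, hb⟩ := exists_mem_notMem_of_card_lt_card hlt
  simp only [missed, mem_union, mem_image, mem_biUnion, mem_filter, mem_nonNeighbors, not_or,
    not_exists, not_and, not_not] at hb
  exact ⟨_, h.insert hx hbS hb.1 fun y hy hyx ↦ hb.2 y ⟨hy, hyx⟩ hbS⟩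

theorem isContained [Finite V] (h : IsPartialCopy G F S T f)
    (hS : ∀ x ∉ T, Nat.card V * (d + 1) < #(S x))
    (hd : ∀ x ∉ T, ∀ y, G.Adj y x → ∀ a ∈ S y, #(nonNeighbors F (S x) a) ≤ d) : G ⊑ F := by
  classical
  have := Fintype.ofFinite V
  have extend : ∀ U : Finset V, ∃ g, IsPartialCopy G F S (U ∪ T) g := by
    intro U
    induction U using Finset.induction_on with
    | empty => exact ⟨f, by simpa using h⟩
    | insert x U _ ih =>
      obtain ⟨g, hg⟩ := ih
      rw [insert_union]
      by_cases hx : x ∈ U ∪ T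
      · exact ⟨g, by rwa [insert_eq_of_mem hx]⟩
      have hxT : x ∉ T := fun hxT ↦ hx (mem_union_right _ hxT)
      refine hg.exists_insert hx ((Nat.mul_le_mul_right _ ?_).trans_lt (hS x hxT))
        fun y hy hyx ↦ hd x hxT y hyx _ (hg.mem y hy)
      exact Nat.card_eq_fintype_card (α := V) ▸ card_le_univ _
  obtain ⟨g, hg⟩ := extend univ
  exact ⟨⟨g, fun {x y} ↦ hg.map_adj x (by simp) y (by simp)⟩,
    fun x y ↦ hg.injOn (by simp) (by simp)⟩

end IsPartialCopy

end Embedding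

section CriticalColoring

variable {V W α : Type*}

/-- The coloring `c` is proper on `G` with the edge `uv` removed, and gives `u` and `v` the same
color. For `k` colors, such a coloring witnesses that a graph of chromatic number `k + 1` is
edge-critical. -/
structure IsCriticalColoring (G : SimpleGraph V) (u v : V) (c : V → α) : Prop where
  adj : G.Adj u v
  apply_eq : c u = c v
  apply_ne : ∀ ⦃x y⦄, G.Adj x y → s(x, y) ≠ s(u, v) → c x ≠ c y

theorem not_colorable_of_chromaticNumber_eq_add_one {G : SimpleGraph V} {k : ℕ}
    (hchi : G.chromaticNumber = (k + 1 : ℕ)) : ¬ G.Colorable k := fun hcol ↦ by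
  have : k + 1 ≤ k := by exact_mod_cast hchi ▸ hcol.chromaticNumber_le
  lia

theorem EdgeCritical.exists_isCriticalColoring {G : SimpleGraph V} {k : ℕ} (hcrit : EdgeCritical G)
    (hchi : G.chromaticNumber = (k + 1 : ℕ)) :
    ∃ (u v : V) (c : V → Fin k), IsCriticalColoring G u v c := by
  obtain ⟨u, v, huv, hdel⟩ := hcrit
  have hle : (G.deleteEdges {s(u, v)}).chromaticNumber ≤ k := by
    rw [hchi, Nat.cast_add, Nat.cast_one] at hdel
    exact (ENat.add_le_add_iff_right ENat.one_ne_top).1 hdel.le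
  obtain ⟨c⟩ := chromaticNumber_le_iff_colorable.1 hle
  have hc : ∀ ⦃x y⦄, G.Adj x y → s(x, y) ≠ s(u, v) → c x ≠ c y := fun x y hxy hne ↦
    c.valid (by simpa [deleteEdges_adj, hxy] using hne)
  refine ⟨u, v, c, huv, ?_, hc⟩
  by_contra hne
  refine not_colorable_of_chromaticNumber_eq_add_one hchi ⟨Coloring.mk c fun {x y} hxy ↦ ?_⟩
  by_cases he : s(x, y) = s(u, v)
  · obtain ⟨rfl, rfl⟩ | ⟨rfl, rfl⟩ := Sym2.eq_iff.1 he
    exacts [hne, Ne.symm hne]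
  · exact hc hxy he

namespace IsCriticalColoring

variable {G : SimpleGraph V} {F : SimpleGraph W} {u v : V} {c : V → α} {A : α → Finset W} {d : ℕ}

theorem comp_injective {β : Type*} (h : IsCriticalColoring G u v c) {e : α → β}
    (he : Function.Injective e) : IsCriticalColoring G u v (e ∘ c) :=
  ⟨h.adj, congrArg e h.apply_eq, fun _ _ hxy hne ↦ he.ne (h.apply_ne hxy hne)⟩

theorem exists_apply_eq (h : IsCriticalColoring G u v c) (i : α) :
    ∃ c' : V → α, IsCriticalColoring G u v c' ∧ c' u = i := by
  classical
  exact ⟨_, h.comp_injective (Equiv.swap (c u) i).injective, Equiv.swap_apply_left _ _⟩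

theorem isContained [Finite V] (h : IsCriticalColoring G u v c) (hA : NearlyMultipartite F A d)
    {B : α → Finset W} (hBA : ∀ i, B i ⊆ A i) (hB : ∀ i, Nat.card V * (d + 1) < #(B i))
    {T : Finset V} {f : V → W} (hu : u ∈ T) (hinj : Set.InjOn f T)
    (hmap : ∀ x ∈ T, ∀ y ∈ T, G.Adj x y → F.Adj (f x) (f y))
    (hjoin : ∀ y ∈ T, ∀ x ∉ T, G.Adj y x → ∀ b ∈ B (c x), F.Adj (f y) b) : G ⊑ F := by
  classical
  have hpartial : IsPartialCopy G F (fun x ↦ if x ∈ T then {f x} else B (c x)) T f :=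
    ⟨fun x hx ↦ by simp [hx], hinj, hmap⟩
  refine hpartial.isContained (d := d) (fun x hx ↦ by simpa [hx] using hB (c x)) ?_
  intro x hx y hyx a ha
  simp only [hx, if_false]
  by_cases hy : y ∈ T
  · obtain rfl : a = f y := by simpa [hy] using ha
    have : nonNeighbors F (B (c x)) (f y) = ∅ := by
      ext b
      simpa using hjoin y hy x hx hyx b
    simp [this]
  · have hcxy : c y ≠ c x := h.apply_ne hyx fun he ↦ by
      obtain ⟨rfl, -⟩ | ⟨-, rfl⟩ := Sym2.eq_iff.1 he
      exacts [hy hu, hx hu]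
    have ha : a ∈ A (c y) := hBA _ (by simpa [hy] using ha)
    exact (card_le_card (nonNeighbors_subset_nonNeighbors (hBA _))).trans (hA hcxy a ha)

/- A vertex with many neighbors in every part can play the role of `u`: once `u` is embedded, the
edge `uv` no longer forces `u` and `v` into the same part. -/
theorem exists_card_le_card_nonNeighbors_add [Finite V] (h : IsCriticalColoring G u v c)
    (hF : G.Free F) (hA : NearlyMultipartite F A d) (w : W) :
    ∃ i, #(A i) ≤ #(nonNeighbors F (A i) w) + Nat.card V * (d + 1) := by
  classical
  by_contra! hcon
  refine hF (h.isContained hA (B := fun i ↦ A i \ nonNeighbors F (A i) w) (fun i ↦ sdiff_subset)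
    (fun i ↦ ?_) (T := {u}) (f := fun _ ↦ w) (by simp) (by simp) (by simp) ?_)
  · have := le_card_sdiff (nonNeighbors F (A i) w) (A i)
    have := hcon i
    lia
  · simp +contextual

/- If `w` and `w'` were adjacent, they could play the roles of `u` and `v`, with the color classes
permuted so that the class of `u` and `v` is hosted by `A i`. -/
theorem not_adj_of_card_nonNeighbors [Finite V] (h : IsCriticalColoring G u v c)
    (hF : G.Free F) (hA : NearlyMultipartite F A d) {w w' : W} {i : α}
    (hi : Nat.card V * (d + 1) < #(A i))
    (hj : ∀ j ≠ i, #(nonNeighbors F (A j) w) + #(nonNeighbors F (A j) w') + Nat.card V * (d + 1)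
      < #(A j)) :
    ¬ F.Adj w w' := by
  classical
  intro hww
  obtain ⟨c, h, rfl⟩ := h.exists_apply_eq i
  have hvu := h.adj.ne'
  let B j := if j = c u then A j else A j \ (nonNeighbors F (A j) w ∪ nonNeighbors F (A j) w')
  have hBA j : B j ⊆ A j := by
    simp only [B]
    split_ifs
    exacts [Subset.rfl, sdiff_subset]
  have hB j : Nat.card V * (d + 1) < #(B j) := by
    by_cases hju : j = c u
    · simpa [B, hju] using hi
    · simp only [B, hju, if_false]
      have := le_card_sdiff (nonNeighbors F (A j) w ∪ nonNeighbors F (A j) w') (A j)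
      have := card_union_le (nonNeighbors F (A j) w) (nonNeighbors F (A j) w')
      have := hj j hju
      lia
  refine hF (h.isContained hA hBA hB (T := {u, v}) (f := fun x ↦ if x = u then w else w')
    (by simp) ?_ ?_ ?_)
  · simp [Set.InjOn, hvu, hww.ne, hww.ne']
  · simp [hvu, hww, hww.symm]
  · intro y hy x hx hyx b hb
    simp only [mem_insert, mem_singleton, not_or] at hy hx
    have hcxy : c x ≠ c y := (h.apply_ne hyx fun he ↦ by
      obtain ⟨-, rfl⟩ | ⟨-, rfl⟩ := Sym2.eq_iff.1 he
      exacts [hx.2 rfl, hx.1 rfl]).symm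
    have hcy : c y = c u := by
      obtain rfl | rfl := hy
      exacts [rfl, h.apply_eq.symm]
    have hBx : B (c x) = A (c x) \ (nonNeighbors F (A (c x)) w ∪ nonNeighbors F (A (c x)) w') :=
      if_neg (hcy ▸ hcxy)
    simp only [hBx, Finset.mem_sdiff, mem_union, mem_nonNeighbors, not_or, not_and, not_not] at hb
    split_ifs
    exacts [hb.2.1 hb.1, hb.2.2 hb.1]

end IsCriticalColoring

end CriticalColoring

section Stability

variable {V W : Type*}

/-- The disjoint sets `A i` have sizes at least `|W| / k - d` and form a `NearlyMultipartite` family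
with error `d`. They need not cover `W`. -/
structure IsNearPartition [Fintype W] {k : ℕ} (F : SimpleGraph W) (A : Fin k → Finset W) (d : ℕ) :
    Prop where
  disjoint : Pairwise (Function.onFun Disjoint A)
  le_card : ∀ i, Fintype.card W ≤ k * (#(A i) + d)
  nearlyMultipartite : NearlyMultipartite F A d

section Finite

variable [Fintype W] {F : SimpleGraph W} {k C d : ℕ} {A : Fin k → Finset W}

theorem mul_card_le_of_isIndepSet (hdeg : ∀ v, k * #(nonNeighbors F univ v) ≤ Fintype.card W + C)
    {S : Finset W} (hS : F.IsIndepSet S) : k * #S ≤ Fintype.card W + C := by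
  obtain rfl | ⟨v, hv⟩ := S.eq_empty_or_nonempty
  · simp
  refine (Nat.mul_le_mul_left k (card_le_card fun w hw ↦ ?_)).trans (hdeg v)
  rw [mem_nonNeighbors]
  refine ⟨mem_univ w, fun hvw ↦ hS hv hw hvw.ne hvw⟩

theorem isNearPartition_of_isIndepSet
    (hdeg : ∀ v, k * #(nonNeighbors F univ v) ≤ Fintype.card W + C) {E : Finset W}
    (hindep : ∀ i, F.IsIndepSet (A i)) (hdisj : Pairwise (Function.onFun Disjoint A))
    (hcover : ∀ v ∉ E, ∃ i, v ∈ A i) : IsNearPartition F A (#E + C) := by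
  classical
  have hcard : Fintype.card W ≤ #E + ∑ i, #(A i) := by
    have hsub : univ ⊆ E ∪ univ.biUnion A := fun v _ ↦ by
      by_cases hv : v ∈ E <;> simp [hv, hcover]
    exact (card_le_card hsub).trans ((card_union_le _ _).trans (by gcongr; exact card_biUnion_le))
  have hsize i : Fintype.card W + C ≤ k * (#(A i) + (#E + C)) := by
    have hothers : ∑ j ∈ univ.erase i, k * #(A j) ≤ (k - 1) * (Fintype.card W + C) :=
      (sum_le_card_nsmul _ _ _ fun j _ ↦ mul_card_le_of_isIndepSet hdeg (hindep j)).trans (by simp)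
    have htotal := Nat.mul_le_mul_left k hcard
    rw [mul_add, mul_sum, ← add_sum_erase _ _ (mem_univ i)] at htotal
    obtain ⟨r, rfl⟩ : ∃ r, k = r + 1 := Nat.exists_eq_succ_of_ne_zero i.pos.ne'
    simp only [Nat.add_sub_cancel] at hothers
    nlinarith
  refine ⟨hdisj, fun i ↦ le_self_add.trans (hsize i), fun i j hij a ha ↦ ?_⟩
  have hsum : #(A i) + #(nonNeighbors F (A j) a) ≤ #(nonNeighbors F univ a) := by
    rw [← card_union_of_disjoint ((hdisj hij).mono_right nonNeighbors_subset)]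
    refine card_le_card fun w hw ↦ mem_nonNeighbors.2 ⟨mem_univ w, fun haw ↦ ?_⟩
    obtain hw | hw := mem_union.1 hw
    exacts [hindep i ha hw haw.ne haw, (mem_nonNeighbors.1 hw).2 haw]
  have := hsize i
  have := hdeg a
  have := Nat.mul_le_mul_left k hsum
  refine le_of_mul_le_mul_left (a := k) ?_ i.pos
  lia

theorem IsNearPartition.card_nonNeighbors_le (hA : IsNearPartition F A d)
    (hdeg : ∀ v, k * #(nonNeighbors F univ v) ≤ Fintype.card W + C) {i j : Fin k} (hij : i ≠ j)
    {v : W} {s : ℕ} (hv : #(A i) ≤ #(nonNeighbors F (A i) v) + s) :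
    #(nonNeighbors F (A j) v) ≤ C + d + s := by
  classical
  have hsum : #(nonNeighbors F (A i) v) + #(nonNeighbors F (A j) v) ≤
      #(nonNeighbors F univ v) := by
    rw [← card_union_of_disjoint ((hA.disjoint hij).mono nonNeighbors_subset nonNeighbors_subset)]
    exact card_le_card (union_subset (nonNeighbors_subset_nonNeighbors (subset_univ _))
      (nonNeighbors_subset_nonNeighbors (subset_univ _)))
  have := hA.le_card i
  have := hdeg v
  have hk := i.pos
  have := Nat.mul_le_mul_left k hsum
  have := Nat.mul_le_mul_left k hv
  have : C ≤ k * C := Nat.le_mul_of_pos_left C hk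
  refine le_of_mul_le_mul_left (a := k) ?_ hk
  lia

theorem sum_sum_card_nonNeighbors_le (hk : 0 < k)
    (hdeg : ∀ v, k * #(nonNeighbors F univ v) ≤ Fintype.card W + C) {M : ℕ}
    (hM : ∀ i, #(A i) = M) :
    ∑ v, ∑ i, #(nonNeighbors F (A i) v) ≤ M * (Fintype.card W + C) := by
  refine le_of_mul_le_mul_left (a := k) ?_ hk
  calc k * ∑ v, ∑ i, #(nonNeighbors F (A i) v)
      = ∑ i, ∑ a ∈ A i, k * #(nonNeighbors F univ a) := by
        rw [sum_comm, mul_sum]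
        exact sum_congr rfl fun i _ ↦ by rw [sum_card_nonNeighbors_comm, mul_sum]
    _ ≤ ∑ i, ∑ _a ∈ A i, (Fintype.card W + C) := by gcongr; exact hdeg _
    _ = k * (M * (Fintype.card W + C)) := by simp [hM]

/- Each vertex already misses about `M` vertices of one part, which is its average share of all the
non-adjacent pairs; missing `L` more in another part can therefore happen only rarely. -/
theorem card_mul_le_of_card_nonNeighbors
    (hdeg : ∀ v, k * #(nonNeighbors F univ v) ≤ Fintype.card W + C) {M L s : ℕ}
    (hM : ∀ i, #(A i) = M) {c : W → Fin k} (hc : ∀ v, M ≤ #(nonNeighbors F (A (c v)) v) + s)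
    {E : Finset W} (hE : ∀ v ∈ E, ∃ j ≠ c v, L ≤ #(nonNeighbors F (A j) v)) :
    #E * L ≤ M * C + Fintype.card W * s := by
  classical
  obtain rfl | ⟨v₀, -⟩ := E.eq_empty_or_nonempty
  · simp
  have hpoint v : (if v ∈ E then L else 0) + M ≤ ∑ i, #(nonNeighbors F (A i) v) + s := by
    have hv := hc v
    split_ifs with hvE
    · obtain ⟨j, hj, hL⟩ := hE v hvE
      have : ∑ i ∈ {j, c v}, #(nonNeighbors F (A i) v) ≤ ∑ i, #(nonNeighbors F (A i) v) :=
        sum_le_sum_of_subset (subset_univ _)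
      rw [sum_pair hj] at this
      lia
    · have : #(nonNeighbors F (A (c v)) v) ≤ ∑ i, #(nonNeighbors F (A i) v) :=
        single_le_sum (f := fun i ↦ #(nonNeighbors F (A i) v)) (fun _ _ ↦ zero_le)
          (mem_univ _)
      lia
  have hsum := sum_le_sum fun v (_ : v ∈ univ) ↦ hpoint v
  simp only [sum_add_distrib, sum_ite_mem, univ_inter, sum_const, card_univ, smul_eq_mul] at hsum
  have := sum_sum_card_nonNeighbors_le (c v₀).pos hdeg hM
  lia

end Finite

theorem le_minDegree_of_card_nonNeighbors_le [Fintype W] [Nonempty W] {F : SimpleGraph W}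
    [DecidableRel F.Adj] {r C : ℕ} (hr : 0 < r)
    (hdeg : ∀ v, (r + 1) * #(nonNeighbors F univ v) ≤ Fintype.card W + C)
    (hC : 2 * r * C ≤ Fintype.card W) :
    (1 - 1 / r + 1 / (2 * r * (r + 1)) : ℝ) * Fintype.card W ≤ F.minDegree := by
  obtain ⟨v, hv⟩ := F.exists_minimal_degree_vertex
  have hsplit : (F.degree v : ℝ) + #(nonNeighbors F univ v) = Fintype.card W := by
    exact_mod_cast degree_add_card_nonNeighbors v
  have hnon : ((r : ℝ) + 1) * #(nonNeighbors F univ v) ≤ Fintype.card W + C := by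
    exact_mod_cast hdeg v
  have hCW : (2 * r * C : ℝ) ≤ Fintype.card W := by exact_mod_cast hC
  have hr : (0 : ℝ) < r := by exact_mod_cast hr
  have hcoeff : (1 - 1 / (r : ℝ) + 1 / (2 * r * (r + 1))) * Fintype.card W
      = (2 * r ^ 2 - 1) * Fintype.card W / (2 * r * (r + 1)) := by
    field_simp
    ring
  rw [hv, hcoeff, div_le_iff₀ (by positivity)]
  nlinarith [hr]

theorem eventually_exists_nearlyMultipartite (k C M : ℕ) :
    ∀ᶠ N in atTop, ∀ F : SimpleGraph (Fin N), (∀ v, k * #(nonNeighbors F univ v) ≤ N + C) →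
      ∃ A : Fin k → Finset (Fin N), (∀ i, #(A i) = M) ∧ NearlyMultipartite F A 0 := by
  classical
  obtain rfl | rfl | ⟨r, hr, rfl⟩ : k = 0 ∨ k = 1 ∨ ∃ r, 0 < r ∧ k = r + 1 := by
    rcases k with _ | _ | r
    exacts [.inl rfl, .inr (.inl rfl), .inr (.inr ⟨r + 1, r.succ_pos, rfl⟩)]
  · exact .of_forall fun N F _ ↦ ⟨fun _ ↦ ∅, fun i ↦ i.elim0, fun i ↦ i.elim0⟩
  · filter_upwards [eventually_ge_atTop M] with N hN F _
    obtain ⟨S, -, hS⟩ := exists_subset_card_eq (s := (univ : Finset (Fin N))) (by simpa using hN)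
    exact ⟨fun _ ↦ S, fun _ ↦ hS, fun i j hij ↦ (hij (Subsingleton.elim i j)).elim⟩
  have hε : (0 : ℝ) < 1 / (2 * r * (r + 1)) := by positivity
  filter_upwards [eventually_completeEquipartiteGraph_isContained_of_minDegree hε r M,
    eventually_ge_atTop (2 * r * C + 1)] with N hErdosStone hN F hdeg
  have : NeZero N := ⟨by lia⟩
  have hmin := le_minDegree_of_card_nonNeighbors_le (F := F) (C := C) hr (by simpa using hdeg)
    (by simpa using (Nat.le_succ _).trans hN)
  rw [Fintype.card_fin] at hmin
  obtain ⟨f⟩ := hErdosStone hmin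
  refine ⟨fun i ↦ univ.image fun x ↦ f (i, x), fun i ↦ ?_, fun i j hij a ha ↦ ?_⟩
  · exact (card_image_of_injective _ (f.injective.comp (Prod.mk_right_injective i))).trans
      (card_fin M)
  · obtain ⟨x, -, rfl⟩ := mem_image.1 ha
    rw [Nat.le_zero, card_eq_zero, eq_empty_iff_forall_notMem]
    intro b hb
    obtain ⟨hb, hnadj⟩ := mem_nonNeighbors.1 hb
    obtain ⟨y, -, rfl⟩ := mem_image.1 hb
    exact hnadj (f.toHom.map_adj (completeEquipartiteGraph_adj.2 hij))

namespace IsCriticalColoring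

variable [Finite V] {G : SimpleGraph V} {k : ℕ} {u v : V} {c : V → Fin k}

theorem exists_isNearPartition [Fintype W] {F : SimpleGraph W} (h : IsCriticalColoring G u v c)
    (hF : G.Free F) {C L : ℕ} (hdeg : ∀ v, k * #(nonNeighbors F univ v) ≤ Fintype.card W + C)
    {A : Fin k → Finset W} (hA : NearlyMultipartite F A 0) (hcard : ∀ i, #(A i) = 4 * L)
    (hL : 2 * Nat.card V ≤ L) :
    ∃ (B : Fin k → Finset W) (e : ℕ), e * L ≤ 4 * L * C + Fintype.card W * Nat.card V ∧
      IsNearPartition F B (e + C) := by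
  classical
  have : Nonempty V := ⟨u⟩
  have hV : 0 < Nat.card V := Nat.card_pos
  choose γ hγ using h.exists_card_le_card_nonNeighbors_add hF hA
  simp only [zero_add, mul_one, hcard] at hγ
  let E : Finset W := {w | ∃ j ≠ γ w, L ≤ #(nonNeighbors F (A j) w)}
  let B i : Finset W := {w | w ∉ E ∧ γ w = i}
  have hfew {w i} (hw : w ∈ B i) {j} (hj : j ≠ i) : #(nonNeighbors F (A j) w) < L := by
    simp only [B, E, mem_filter_univ, not_exists, not_and, not_le] at hw
    exact hw.1 j (hw.2 ▸ hj)
  have hindep i : F.IsIndepSet (B i) := fun w hw w' hw' _ ↦ by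
    refine h.not_adj_of_card_nonNeighbors hF hA (i := i) (by rw [hcard]; lia) fun j hj ↦ ?_
    have := hfew hw hj
    have := hfew hw' hj
    rw [hcard]
    lia
  refine ⟨B, #E, card_mul_le_of_card_nonNeighbors hdeg hcard hγ (by simp [E]),
    isNearPartition_of_isIndepSet hdeg hindep (fun i j hij ↦ ?_) fun w hw ↦ ⟨γ w, by simp [B, hw]⟩⟩
  refine disjoint_left.2 fun w hwi hwj ↦ hij ?_
  simp only [B, mem_filter_univ] at hwi hwj
  exact hwi.2.symm.trans hwj.2

theorem eventually_exists_isNearPartition (h : IsCriticalColoring G u v c) (C Q : ℕ) :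
    ∀ᶠ N in atTop, ∀ F : SimpleGraph (Fin N), G.Free F →
      (∀ v, k * #(nonNeighbors F univ v) ≤ N + C) →
      ∃ (A : Fin k → Finset (Fin N)) (d : ℕ), Q * d ≤ N ∧ IsNearPartition F A d := by
  have : Nonempty V := ⟨u⟩
  have hV : 0 < Nat.card V := Nat.card_pos
  set L := 2 * Nat.card V * (Q + 1) with hL
  filter_upwards [eventually_exists_nearlyMultipartite k C (4 * L),
    eventually_ge_atTop (10 * (Q + 1) * C)] with N hblowup hN F hF hdeg
  obtain ⟨A, hcard, hA⟩ := hblowup F hdeg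
  obtain ⟨B, e, he, hB⟩ := h.exists_isNearPartition hF (by simpa using hdeg) hA hcard (by lia)
  refine ⟨B, e + C, ?_, hB⟩
  have he : 2 * (Q + 1) * e ≤ 8 * (Q + 1) * C + N := by
    rw [Fintype.card_fin] at he
    refine le_of_mul_le_mul_left (a := Nat.card V) ?_ hV
    rw [hL] at he
    linarith
  lia

theorem colorable_of_isNearPartition [Fintype W] {F : SimpleGraph W}
    (h : IsCriticalColoring G u v c) (hF : G.Free F) {C d : ℕ}
    (hdeg : ∀ v, k * #(nonNeighbors F univ v) ≤ Fintype.card W + C)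
    {A : Fin k → Finset W} (hA : IsNearPartition F A d)
    (hcard : k * (2 * C + 3 * d + 3 * (Nat.card V * (d + 1))) < Fintype.card W) :
    F.Colorable k := by
  have hbig i : 2 * (C + d + Nat.card V * (d + 1)) + Nat.card V * (d + 1) < #(A i) := by
    have := hcard.trans_le (hA.le_card i)
    have := Nat.lt_of_mul_lt_mul_left this
    lia
  choose γ hγ using h.exists_card_le_card_nonNeighbors_add hF hA.nearlyMultipartite
  refine ⟨Coloring.mk γ fun {w w'} hww hγw ↦ ?_⟩
  refine h.not_adj_of_card_nonNeighbors hF hA.nearlyMultipartite (i := γ w) ?_ ?_ hww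
  · have := hbig (γ w)
    lia
  · intro j hj
    have := hA.card_nonNeighbors_le hdeg hj.symm (hγ w)
    have := hA.card_nonNeighbors_le hdeg (hγw ▸ hj.symm) (hγ w')
    have := hbig j
    lia

theorem eventually_colorable (h : IsCriticalColoring G u v c) (C : ℕ) :
    ∀ᶠ N in atTop, ∀ F : SimpleGraph (Fin N), G.Free F →
      (∀ v, k * #(nonNeighbors F univ v) ≤ N + C) → F.Colorable k := by
  set m := Nat.card V with hm
  filter_upwards [h.eventually_exists_isNearPartition C (2 * k * (3 + 3 * m)),
    eventually_gt_atTop (2 * k * (2 * C + 3 * m))] with N hpart hN F hF hdeg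
  obtain ⟨A, d, hd, hA⟩ := hpart F hF hdeg
  refine h.colorable_of_isNearPartition hF (by simpa using hdeg) hA ?_
  rw [Fintype.card_fin, ← hm]
  linarith

end IsCriticalColoring

end Stability

section Ramsey

variable {V W : Type*}

theorem cliqueFree_of_free {G : SimpleGraph V} {F : SimpleGraph W} [Finite V] (hF : G.Free F) :
    F.CliqueFree (Nat.card V) := by
  have := Fintype.ofFinite V
  rw [Nat.card_eq_fintype_card, cliqueFree_iff_top_free]
  exact fun h ↦ hF (h.mono_left le_top)

/- The Erdős–Szekeres recursion `R(a + 1, b + 1) ≤ R(a, b + 1) + R(a + 1, b)` is Pascal's rule. -/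
theorem exists_isNClique_or_isNIndepSet (F : SimpleGraph W) (a b : ℕ) (S : Finset W)
    (hS : (a + b).choose a ≤ #S) : ∃ T ⊆ S, F.IsNClique a T ∨ F.IsNIndepSet b T := by
  classical
  induction a generalizing b S with
  | zero => exact ⟨∅, empty_subset S, .inl (by simp)⟩
  | succ a iha =>
  induction b generalizing S with
  | zero => exact ⟨∅, empty_subset S, .inr (by simp [isNIndepSet_iff])⟩
  | succ b ihb =>
    have hpascal : (a + 1 + (b + 1)).choose (a + 1) =
        (a + (b + 1)).choose a + (a + 1 + b).choose (a + 1) := by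
      rw [show a + 1 + (b + 1) = a + (b + 1) + 1 by lia, Nat.choose_succ_succ,
        show a + (b + 1) = a + 1 + b by lia]
    have hpos : 0 < (a + (b + 1)).choose a := Nat.choose_pos (by lia)
    obtain ⟨v, hv⟩ : S.Nonempty := card_pos.1 (by lia)
    have hsplit := card_filter_add_card_filter_not (s := S.erase v) (F.Adj v)
    rw [card_erase_of_mem hv] at hsplit
    have hsub (p : W → Prop) [DecidablePred p] : {w ∈ S.erase v | p w} ⊆ S :=
      (filter_subset _ _).trans (erase_subset _ _)
    obtain hadj | hnadj : (a + (b + 1)).choose a ≤ #{w ∈ S.erase v | F.Adj v w} ∨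
        (a + 1 + b).choose (a + 1) ≤ #{w ∈ S.erase v | ¬ F.Adj v w} := by lia
    · obtain ⟨T, hT, hclique | hindep⟩ := iha (b + 1) _ hadj
      · exact ⟨insert v T, insert_subset hv (hT.trans (hsub _)),
          .inl (hclique.insert fun w hw ↦ (mem_filter.1 (hT hw)).2)⟩
      · exact ⟨T, hT.trans (hsub _), .inr hindep⟩
    · obtain ⟨T, hT, hclique | hindep⟩ := ihb _ hnadj
      · exact ⟨T, hT.trans (hsub _), .inl hclique⟩
      · refine ⟨insert v T, insert_subset hv (hT.trans (hsub _)), .inr ?_⟩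
        rw [← isNClique_compl] at hindep ⊢
        refine hindep.insert fun w hw ↦ ?_
        have hw := mem_filter.1 (hT hw)
        exact (compl_adj ..).2 ⟨(ne_of_mem_erase hw.1).symm, hw.2⟩

end Ramsey

section Fan

variable {V W : Type*}

theorem exists_pairwise_disjoint_subsets {P : Finset W → Prop} {R t : ℕ}
    (hP : ∀ S : Finset W, R ≤ #S → ∃ T ⊆ S, #T = t ∧ P T) (n : ℕ) {B : Finset W}
    (hB : n * t + R ≤ #B) :
    ∃ T : Fin n → Finset W, Pairwise (Function.onFun Disjoint T) ∧
      ∀ i, T i ⊆ B ∧ #(T i) = t ∧ P (T i) := by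
  classical
  induction n with
  | zero => exact ⟨fun _ ↦ ∅, fun i ↦ i.elim0, fun i ↦ i.elim0⟩
  | succ n ih =>
    rw [Nat.succ_mul] at hB
    obtain ⟨T, hdisj, hT⟩ := ih (by lia)
    have hused : #(univ.biUnion T) ≤ n * t := by
      simpa using card_biUnion_le_card_mul univ T t fun i _ ↦ (hT i).2.1.le
    obtain ⟨X, hXsub, hX⟩ := hP (B \ univ.biUnion T) (by
      have := le_card_sdiff (univ.biUnion T) B
      lia)
    have hXT i : Disjoint X (T i) := disjoint_of_subset_left hXsub
      (disjoint_of_subset_right (subset_biUnion_of_mem T (mem_univ i)) sdiff_disjoint)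
    refine ⟨Fin.cons X T, fun i j ↦ ?_, Fin.cases ⟨hXsub.trans sdiff_subset, hX⟩ hT⟩
    cases i using Fin.cases <;> cases j using Fin.cases <;> intro hij
    · exact (hij rfl).elim
    · exact hXT _
    · exact (hXT _).symm
    · exact hdisj (ne_of_apply_ne Fin.succ hij)

variable {n t : ℕ}

theorem genFan_isContained {H : SimpleGraph W} {v : W} {g : Fin n × Fin t → W}
    (hg : Function.Injective g) (hv : ∀ p, H.Adj v (g p))
    (hclique : ∀ p q, p ≠ q → p.1 = q.1 → H.Adj (g p) (g q)) : genFan n t ⊑ H := by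
  refine ⟨⟨⟨fun o ↦ o.elim v g, ?_⟩, ?_⟩⟩
  · rintro (_ | p) (_ | q) hpq
    · exact (hpq.ne rfl).elim
    · exact hv q
    · exact (hv p).symm
    · obtain ⟨hne, hpq⟩ := (fromRel_adj _ _ _).1 hpq
      exact hclique p q (by simpa using hne) (by simpa [eq_comm] using hpq)
  · rintro (_ | p) (_ | q) hpq
    · rfl
    · exact ((hv q).ne hpq).elim
    · exact ((hv p).ne hpq.symm).elim
    · exact congrArg some (hg hpq)

theorem genFan_isContained_of_isNClique {H : SimpleGraph W} {v : W} {T : Fin n → Finset W}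
    (hdisj : Pairwise (Function.onFun Disjoint T)) (hT : ∀ i, H.IsNClique t (T i))
    (hv : ∀ i, ∀ w ∈ T i, H.Adj v w) : genFan n t ⊑ H := by
  let e i : T i ≃ Fin t := (T i).equivFinOfCardEq (hT i).card_eq
  let g (p : Fin n × Fin t) : W := (e p.1).symm p.2
  have hgT p : g p ∈ T p.1 := ((e p.1).symm p.2).2
  have hg : Function.Injective g := by
    rintro ⟨i, a⟩ ⟨j, b⟩ hpq
    obtain rfl : i = j := by
      by_contra hij
      exact disjoint_left.1 (hdisj hij) (hgT (i, a)) (hpq ▸ hgT (j, b))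
    simpa [g, Subtype.ext_iff] using hpq
  exact genFan_isContained hg (fun p ↦ hv _ _ (hgT p)) fun p q hpq h1 ↦
    (hT p.1).isClique (hgT p) (h1 ▸ hgT q) (hg.ne hpq)

theorem card_nonNeighbors_le_of_genFan_free [Fintype W] {F : SimpleGraph W} {a : ℕ}
    (hF : F.CliqueFree a) (hfan : (genFan n t).Free Fᶜ) (v : W) :
    #(nonNeighbors F univ v) ≤ n * t + (a + t).choose a := by
  classical
  by_contra! hlt
  have hindep (S : Finset W) (hS : (a + t).choose a ≤ #S) :
      ∃ T ⊆ S, #T = t ∧ F.IsNIndepSet t T := by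
    obtain ⟨T, hTS, hT | hT⟩ := exists_isNClique_or_isNIndepSet F a t S hS
    exacts [(hF T hT).elim, ⟨T, hTS, hT.card_eq, hT⟩]
  obtain ⟨T, hdisj, hT⟩ := exists_pairwise_disjoint_subsets hindep n
    (B := (nonNeighbors F univ v).erase v) (by
      have := pred_card_le_card_erase (s := nonNeighbors F univ v) (a := v)
      lia)
  refine hfan (genFan_isContained_of_isNClique hdisj (v := v) (fun i ↦ ?_) fun i w hw ↦ ?_)
  · exact (isNClique_compl F).2 (hT i).2.2
  · obtain ⟨hwv, hw⟩ := mem_erase.1 ((hT i).1 hw)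
    exact (compl_adj ..).2 ⟨hwv.symm, (mem_nonNeighbors.1 hw).2⟩

theorem card_le_of_colorable_of_genFan_free [Fintype W] {F : SimpleGraph W} {k : ℕ}
    (hF : F.Colorable k) (hfan : (genFan n t).Free Fᶜ) : Fintype.card W ≤ k * (n * t) := by
  classical
  obtain ⟨c⟩ := hF
  by_contra! hlt
  obtain ⟨i, hi⟩ := Fintype.exists_lt_card_fiber_of_mul_lt_card c (by simpa using hlt)
  have hclique : Fᶜ.IsClique ({w | c w = i} : Finset W) := fun x hx y hy hxy ↦ by
    rw [mem_coe, mem_filter_univ] at hx hy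
    exact (compl_adj ..).2 ⟨hxy, fun hadj ↦ c.valid hadj (hx.trans hy.symm)⟩
  refine (cliqueFree_of_free hfan).mono ?_ _ ⟨hclique, rfl⟩
  simpa using hi

theorem lt_of_arrows_genFan {G : SimpleGraph V} {k N : ℕ} (hG : ¬ G.Colorable k)
    (harr : arrows N G (genFan n t)) : k * (n * t) < N := by
  by_contra! hle
  obtain ⟨e⟩ : Nonempty (Fin N ↪ Fin k × Fin (n * t)) :=
    Function.Embedding.nonempty_of_card_le (by simpa using hle)
  let part (a : Fin N) : Fin k := (e a).1
  obtain ⟨f, -⟩ | ⟨f, hf⟩ := harr ((⊤ : SimpleGraph (Fin k)).comap part)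
  · exact hG ⟨Coloring.mk (part ∘ f) fun hxy ↦ f.map_adj hxy⟩
  have hpart : ∀ x, part (f x) = part (f none)
    | none => rfl
    | some p => by
      have hadj : (genFan n t).Adj (some p) none := by simp [genFan]
      simpa using ((compl_adj ..).1 (f.map_adj hadj)).2
  have hinj : Function.Injective fun x ↦ (e (f x)).2 := fun x y hxy ↦
    hf (e.injective (Prod.ext ((hpart x).trans (hpart y).symm) hxy))
  simpa using Fintype.card_le_of_injective _ hinj

theorem eventually_arrows_genFan [Finite V] {G : SimpleGraph V} {k : ℕ} {u v : V} {c : V → Fin k}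
    (h : IsCriticalColoring G u v c) (ht : 1 ≤ t) :
    ∀ᶠ n in atTop, arrows (k * n * t + 1) G (genFan n t) := by
  let R := (Nat.card V + t).choose (Nat.card V)
  have hlarge : Tendsto (fun n ↦ k * n * t + 1) atTop atTop :=
    tendsto_atTop_mono (fun n ↦ ((Nat.le_mul_of_pos_left n (c u).pos).trans
      (Nat.le_mul_of_pos_right _ ht)).trans (Nat.le_succ _)) tendsto_id
  filter_upwards [hlarge.eventually (h.eventually_colorable (k * R))] with n hcol F
  simp only [containsCopy_iff_isContained]
  by_contra hF
  rw [not_or] at hF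
  have hdeg w : k * #(nonNeighbors F univ w) ≤ k * n * t + 1 + k * R := by
    have := Nat.mul_le_mul_left k
      (card_nonNeighbors_le_of_genFan_free (cliqueFree_of_free hF.1) hF.2 w)
    lia
  have := card_le_of_colorable_of_genFan_free (hcol F hF.1 hdeg) hF.2
  rw [Fintype.card_fin] at this
  lia

end Fan

theorem statement_0_general (k t : ℕ) (ht : 1 ≤ t) {V : Type*} [Finite V] (G : SimpleGraph V)
    (hchi : G.chromaticNumber = (k + 1 : ℕ)) (hcrit : EdgeCritical G) :
    ∃ n₀ : ℕ, ∀ n : ℕ, n₀ ≤ n → ramseyNumber G (genFan n t) = k * n * t + 1 := by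
  obtain ⟨u, v, c, h⟩ := hcrit.exists_isCriticalColoring hchi
  obtain ⟨n₀, hn₀⟩ := eventually_atTop.1 (eventually_arrows_genFan h ht)
  refine ⟨n₀, fun n hn ↦ IsLeast.csInf_eq ⟨⟨Nat.succ_pos _, hn₀ n hn⟩, fun N hN ↦ ?_⟩⟩
  rw [mul_assoc]
  exact lt_of_arrows_genFan (not_colorable_of_chromaticNumber_eq_add_one hchi) hN.2

theorem statement_0 (k t : ℕ) (hk : 2 ≤ k) (ht : 2 ≤ t)
    {V : Type*} [Fintype V] (G : SimpleGraph V)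
    (hchi : G.chromaticNumber = (k + 1 : ℕ)) (hcrit : EdgeCritical G) :
    ∃ n₀ : ℕ, ∀ n : ℕ, n₀ ≤ n → ramseyNumber G (genFan n t) = k * n * t + 1 :=
  statement_0_general k t (by lia) G hchi hcrit
end

section
/- Let k ≥ 2 and t ≥ 2 be integers and let G be a fixed edge-critical graph with chromatic number χ(G) = k + 1. Then there exists n₀ such that for all integers n ≥ n₀, every 2-coloring of the edges of the complete graph on k·n·t + 1 vertices with colors red and blue contains either a red copy of G or a blue copy of K₁ + nK_t. -/
open SimpleGraph

/-!
If a coloring has no red `G`, Ramsey's theorem packs disjoint blue copies of `K_t` into any blue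
neighborhood, so without a blue fan every vertex has at most `n * t + O(1)` red non-neighbors:
the red minimum degree is essentially that of a balanced complete `k`-partite graph.

The rest is a stability argument for edge-critical graphs in the style of Simonovits. Since `G`
loses a color with one edge, the red graph contains no complete `k`-partite graph with large parts
and an additional edge inside a part. By the Erdős–Stone theorem it does contain a complete
`k`-partite graph with large parts of bounded size; recording for each vertex the part in which it
has few neighbors properly colors all but a small proportion of the vertices. The color classes
are now of linear size and almost completely joined, and classifying the vertices a second time,
relative to these classes, properly `k`-colors the whole red graph. Finally, the largest of the
`k` color classes among `k * n * t + 1` vertices is a blue clique on at least `n * t + 1` vertices.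
-/

section

open Finset

variable {U V W ι : Type*}

/-! ### Cliques and fans -/

theorem containsCopy_of_isClique [Fintype V] {G : SimpleGraph V} {R : SimpleGraph W} {T : Finset W}
    (hT : R.IsClique T) (hcard : Fintype.card V ≤ #T) : containsCopy R G := by
  obtain ⟨φ⟩ : Nonempty (V ↪ T) := Function.Embedding.nonempty_of_card_le (by simpa using hcard)
  have hφ : Function.Injective fun a ↦ (φ a : W) := Subtype.val_injective.comp φ.injective
  exact ⟨⟨fun a ↦ φ a, fun hab ↦ hT (φ _).2 (φ _).2 (hφ.ne hab.ne)⟩, hφ⟩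

theorem exists_isNClique_or_isNClique_compl (R : SimpleGraph W) :
    ∀ (a b : ℕ) (S : Finset W), (a + b).choose a ≤ #S →
      (∃ T ⊆ S, R.IsNClique a T) ∨ ∃ T ⊆ S, Rᶜ.IsNClique b T
  | 0, _, _, _ => .inl ⟨∅, empty_subset _, by simp⟩
  | _ + 1, 0, _, _ => .inr ⟨∅, empty_subset _, by simp⟩
  | a + 1, b + 1, S, hS => by
    classical
    obtain ⟨v, hv⟩ : S.Nonempty := card_pos.mp ((Nat.choose_pos (by lia)).trans_le hS)
    have hpascal : (a + 1 + (b + 1)).choose (a + 1) =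
        (a + (b + 1)).choose a + (a + 1 + b).choose (a + 1) := by
      rw [← Nat.add_assoc, Nat.choose_succ_succ', Nat.add_right_comm a 1 b, Nat.add_assoc a b 1]
    have hsplit := card_filter_add_card_filter_not (s := S.erase v) (R.Adj v)
    rw [card_erase_of_mem hv] at hsplit
    have hsub (p : W → Prop) [DecidablePred p] : {w ∈ S.erase v | p w} ⊆ S :=
      (filter_subset _ _).trans (erase_subset _ _)
    by_cases hred : (a + (b + 1)).choose a ≤ #{w ∈ S.erase v | R.Adj v w}
    · obtain ⟨T, hTS, hT⟩ | ⟨T, hTS, hT⟩ := exists_isNClique_or_isNClique_compl R a (b + 1) _ hred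
      · exact .inl ⟨insert v T, insert_subset hv (hTS.trans (hsub _)),
          hT.insert fun w hw ↦ (mem_filter.mp (hTS hw)).2⟩
      · exact .inr ⟨T, hTS.trans (hsub _), hT⟩
    · have hblue : (a + 1 + b).choose (a + 1) ≤ #{w ∈ S.erase v | ¬R.Adj v w} := by lia
      obtain ⟨T, hTS, hT⟩ | ⟨T, hTS, hT⟩ := exists_isNClique_or_isNClique_compl R (a + 1) b _ hblue
      · exact .inl ⟨T, hTS.trans (hsub _), hT⟩
      · refine .inr ⟨insert v T, insert_subset hv (hTS.trans (hsub _)), hT.insert fun w hw ↦ ?_⟩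
        obtain ⟨hw, hvw⟩ := mem_filter.mp (hTS hw)
        exact (R.compl_adj v w).mpr ⟨(ne_of_mem_erase hw).symm, hvw⟩

theorem exists_pairwise_disjoint_isNClique {B : SimpleGraph W} {r t : ℕ}
    (hB : ∀ S : Finset W, r ≤ #S → ∃ T ⊆ S, B.IsNClique t T) (n : ℕ) (S : Finset W)
    (hS : n * t + r ≤ #S) :
    ∃ T : Fin n → Finset W,
      (Pairwise fun i j ↦ Disjoint (T i) (T j)) ∧ ∀ i, T i ⊆ S ∧ B.IsNClique t (T i) := by
  classical
  induction n generalizing S with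
  | zero => exact ⟨Fin.elim0, fun i ↦ i.elim0, fun i ↦ i.elim0⟩
  | succ n ih =>
    obtain ⟨T₀, hT₀S, hT₀⟩ := hB S (by lia)
    obtain ⟨T, hdisj, hT⟩ := ih (S \ T₀) (by
      rw [card_sdiff_of_subset hT₀S, hT₀.card_eq]
      lia)
    have hdisj₀ (i : Fin n) : Disjoint T₀ (T i) := disjoint_sdiff.mono_right (hT i).1
    refine ⟨Fin.cons T₀ T, fun i j hij ↦ ?_, Fin.cases ⟨hT₀S, hT₀⟩ fun i ↦
      ⟨(hT i).1.trans sdiff_subset, (hT i).2⟩⟩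
    cases i using Fin.cases <;> cases j using Fin.cases
    · exact absurd rfl hij
    · exact hdisj₀ _
    · exact (hdisj₀ _).symm
    · exact hdisj fun h ↦ hij (congrArg Fin.succ h)

theorem containsCopy_genFan {B : SimpleGraph W} {n t : ℕ} {v : W} {T : Fin n → Finset W}
    (hdisj : Pairwise fun i j ↦ Disjoint (T i) (T j)) (hT : ∀ i, B.IsNClique t (T i))
    (hv : ∀ i, ∀ w ∈ T i, B.Adj v w) : containsCopy B (genFan n t) := by
  let e (i : Fin n) : Fin t ≃ T i := ((T i).equivFinOfCardEq (hT i).card_eq).symm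
  let g (p : Fin n × Fin t) : W := e p.1 p.2
  have hgT (p) : g p ∈ T p.1 := (e p.1 p.2).2
  have hvg (p) : B.Adj v (g p) := hv p.1 _ (hgT p)
  have hg : Function.Injective g := by
    rintro ⟨i, a⟩ ⟨j, b⟩ hab
    obtain rfl : i = j := by
      by_contra hij
      exact disjoint_left.mp (hdisj hij) (hgT (i, a)) (hab ▸ hgT (j, b))
    exact congrArg _ ((e i).injective (Subtype.ext hab))
  have hclique {p q : Fin n × Fin t} (hpq : p ≠ q) (h : p.1 = q.1) : B.Adj (g p) (g q) :=
    (hT p.1).isClique (hgT p) (h ▸ hgT q) (hg.ne hpq)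
  refine ⟨⟨fun o ↦ o.elim v g, fun {a b} hab ↦ ?_⟩, ?_⟩
  · rw [genFan, fromRel_adj] at hab
    rcases a with _ | p <;> rcases b with _ | q
    · exact absurd rfl hab.1
    · exact hvg q
    · exact (hvg p).symm
    · refine hclique (fun h ↦ hab.1 (congrArg some h)) ?_
      simpa [eq_comm (a := q.1)] using hab.2
  · rintro (_ | p) (_ | q) hab
    · rfl
    · exact absurd hab (hvg q).ne
    · exact absurd hab (hvg p).ne'
    · exact congrArg some (hg hab)

theorem containsCopy_compl_of_colorable [Fintype U] [Fintype W] {H : SimpleGraph U}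
    {R : SimpleGraph W} {k : ℕ} (hR : R.Colorable k)
    (hcard : k * (Fintype.card U - 1) < Fintype.card W) : containsCopy Rᶜ H := by
  obtain ⟨c⟩ := hR
  obtain ⟨i, hi⟩ := Fintype.exists_lt_card_fiber_of_mul_lt_card c (by simpa using hcard)
  refine containsCopy_of_isClique (T := {v | c v = i}) ?_ (by lia)
  refine (isClique_compl _).mpr fun v hv w hw _ hvw ↦ c.valid hvw ?_
  simp_all

/-! ### Non-neighbors -/

section NonNeighbors

variable {R : SimpleGraph W} [DecidableRel R.Adj] {A : ι → Finset W} {e m : ℕ}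

/-- The vertices of `A` not adjacent to `v`, which measure how far `v` is from being completely
joined to `A`. If `v ∈ A`, then `v` itself is included. -/
def nonNeighborsIn (R : SimpleGraph W) [DecidableRel R.Adj] (A : Finset W) (v : W) : Finset W :=
  {w ∈ A | ¬R.Adj v w}

@[simp]
theorem mem_nonNeighborsIn {A : Finset W} {v w : W} :
    w ∈ nonNeighborsIn R A v ↔ w ∈ A ∧ ¬R.Adj v w :=
  mem_filter

theorem nonNeighborsIn_subset (A : Finset W) (v : W) : nonNeighborsIn R A v ⊆ A :=
  filter_subset _ _

theorem nonNeighborsIn_mono {A B : Finset W} (hAB : A ⊆ B) (v : W) :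
    nonNeighborsIn R A v ⊆ nonNeighborsIn R B v :=
  filter_subset_filter _ hAB

theorem card_nonNeighborsIn_univ_add_degree [Fintype W] (v : W) :
    #(nonNeighborsIn R univ v) + R.degree v = Fintype.card W := by
  rw [← card_neighborFinset_eq_degree, neighborFinset_eq_filter, nonNeighborsIn, add_comm,
    card_filter_add_card_filter_not, card_univ]

theorem sum_card_nonNeighborsIn_comm [Fintype W] (A : Finset W) :
    ∑ v, #(nonNeighborsIn R A v) = ∑ w ∈ A, #(nonNeighborsIn R univ w) := by
  refine (sum_card_bipartiteAbove_eq_sum_card_bipartiteBelow fun v w ↦ ¬R.Adj v w).trans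
    (sum_congr rfl fun w _ ↦ ?_)
  simp only [bipartiteBelow, nonNeighborsIn, R.adj_comm w]

theorem card_nonNeighborsIn_univ_le [Fintype V] [Fintype W] {G : SimpleGraph V} {n t : ℕ}
    (hG : ¬containsCopy R G) (hfan : ¬containsCopy Rᶜ (genFan n t)) (v : W) :
    #(nonNeighborsIn R univ v) ≤ n * t + (Fintype.card V + t).choose (Fintype.card V) := by
  classical
  by_contra! hlt
  have hclique (S : Finset W) (hS : (Fintype.card V + t).choose (Fintype.card V) ≤ #S) :
      ∃ T ⊆ S, Rᶜ.IsNClique t T :=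
    (exists_isNClique_or_isNClique_compl R _ t S hS).resolve_left fun ⟨_, _, hT⟩ ↦
      hG (containsCopy_of_isClique hT.isClique hT.card_eq.ge)
  obtain ⟨T, hdisj, hT⟩ := exists_pairwise_disjoint_isNClique hclique n
    ((nonNeighborsIn R univ v).erase v) (by rw [card_erase_of_mem (by simp)]; lia)
  refine hfan (containsCopy_genFan hdisj (fun i ↦ (hT i).2) (v := v) fun i w hw ↦ ?_)
  simpa [eq_comm] using (hT i).1 hw

theorem card_nonNeighborsIn_add_card_le [Fintype W] {A B : Finset W} (hA : R.IsIndepSet A)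
    (hAB : Disjoint A B) {v : W} (hv : v ∈ A) :
    #(nonNeighborsIn R B v) + #A ≤ #(nonNeighborsIn R univ v) := by
  classical
  have hAv : A ⊆ nonNeighborsIn R univ v := fun w hw ↦
    mem_nonNeighborsIn.mpr ⟨mem_univ w, fun hvw ↦ hA hv hw hvw.ne hvw⟩
  rw [← card_union_of_disjoint (hAB.symm.mono_left (nonNeighborsIn_subset B v))]
  exact card_le_card (union_subset (nonNeighborsIn_mono (subset_univ B) v) hAv)

theorem exists_subset_isCompleteBetween {X A : Finset W}
    (hX : ∀ x ∈ X, #(nonNeighborsIn R A x) ≤ e) (hA : #X * e + m ≤ #A) :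
    ∃ B ⊆ A, #B = m ∧ R.IsCompleteBetween X B := by
  classical
  let missed : Finset W := X.biUnion (nonNeighborsIn R A)
  have hmissed : #missed ≤ #X * e := card_biUnion_le_card_mul _ _ _ hX
  obtain ⟨B, hB, hBm⟩ : ∃ B ⊆ A \ missed, #B = m :=
    exists_subset_card_eq (by have := le_card_sdiff missed A; lia)
  refine ⟨B, hB.trans sdiff_subset, hBm, fun x hx w hw ↦ ?_⟩
  obtain ⟨hwA, hw⟩ := mem_sdiff.mp (hB hw)
  by_contra hxw
  exact hw (mem_biUnion.mpr ⟨x, hx, mem_nonNeighborsIn.mpr ⟨hwA, hxw⟩⟩)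

/-! ### Almost complete families -/

/-- The family `A` spans a complete multipartite graph up to few missing edges: each vertex of one
part misses at most `e` vertices of every other part. -/
def AlmostComplete (R : SimpleGraph W) [DecidableRel R.Adj] (e : ℕ) (A : ι → Finset W) : Prop :=
  ∀ ⦃i j⦄, i ≠ j → ∀ x ∈ A i, #(nonNeighborsIn R (A j) x) ≤ e

theorem AlmostComplete.of_pairwise_isCompleteBetween
    (hA : Pairwise fun i j ↦ R.IsCompleteBetween (A i) (A j)) : AlmostComplete R 0 A :=
  fun i j hij x hx ↦ by
    rw [Nat.le_zero, card_eq_zero, nonNeighborsIn, filter_eq_empty_iff]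
    exact fun w hw hxw ↦ hxw (hA hij hx hw)

theorem AlmostComplete.mono (hA : AlmostComplete R e A) {S : ι → Finset W} (hS : ∀ i, S i ⊆ A i) :
    AlmostComplete R e S := fun i j hij x hx ↦
  (card_le_card (nonNeighborsIn_mono (hS j) x)).trans (hA hij x (hS i hx))

theorem AlmostComplete.exists_isCompleteBetween [Fintype ι] (hA : AlmostComplete R e A)
    (hcard : ∀ i, Fintype.card ι * m * e + m ≤ #(A i)) :
    ∃ T : ι → Finset W, (∀ i, T i ⊆ A i ∧ #(T i) = m) ∧
      Pairwise fun i j ↦ R.IsCompleteBetween (T i) (T j) := by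
  classical
  suffices h : ∀ I : Finset ι, ∃ T : ι → Finset W, (∀ i ∈ I, T i ⊆ A i ∧ #(T i) = m) ∧
      (I : Set ι).Pairwise fun i j ↦ R.IsCompleteBetween (T i) (T j) by
    simpa [Set.pairwise_univ] using h univ
  intro I
  induction I using Finset.induction_on with
  | empty => exact ⟨fun _ ↦ ∅, by simp⟩
  | insert i I hi ih =>
    obtain ⟨T, hT, hcomplete⟩ := ih
    have hne {j : ι} (hj : j ∈ I) : j ≠ i := ne_of_mem_of_not_mem hj hi
    have hunion : #(I.biUnion T) * e ≤ Fintype.card ι * m * e := by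
      gcongr
      exact (card_biUnion_le_card_mul _ _ _ fun j hj ↦ (hT j hj).2.le).trans
        (Nat.mul_le_mul_right m (card_le_univ I))
    obtain ⟨B, hBA, hBm, hB⟩ := exists_subset_isCompleteBetween (R := R) (X := I.biUnion T)
      (A := A i) (e := e) (m := m) (fun x hx ↦ by
        obtain ⟨j, hj, hx⟩ := mem_biUnion.mp hx
        exact hA (hne hj) x ((hT j hj).1 hx)) (by have := hcard i; lia)
    have hTB (j) (hj : j ∈ I) : R.IsCompleteBetween (T j) B := fun x hx w hw ↦
      hB (mem_biUnion.mpr ⟨j, hj, hx⟩) hw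
    refine ⟨Function.update T i B, ?_, ?_⟩
    · intro j hj
      obtain rfl | hj := mem_insert.mp hj
      · simpa using ⟨hBA, hBm⟩
      · simpa [hne hj] using hT j hj
    · intro j hj l hl hjl
      rw [mem_coe, mem_insert] at hj hl
      obtain rfl | hj := hj <;> obtain rfl | hl := hl
      · exact absurd rfl hjl
      · simpa [hne hl] using (hTB l hl).symm
      · simpa [hne hj] using hTB j hj
      · simpa [hne hj, hne hl] using hcomplete hj hl hjl

end NonNeighbors

/-! ### Complete multipartite subgraphs -/

theorem exists_pairwise_isCompleteBetween_of_isContained {R : SimpleGraph W} {k s : ℕ}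
    (h : completeEquipartiteGraph k s ⊑ R) :
    ∃ A : Fin k → Finset W, (∀ i, #(A i) = s) ∧
      Pairwise fun i j ↦ R.IsCompleteBetween (A i) (A j) := by
  obtain ⟨f⟩ := h
  refine ⟨fun i ↦ univ.map ⟨fun a ↦ f (i, a), fun a b hab ↦ ?_⟩, fun i ↦ by simp,
    fun i j hij x hx y hy ↦ ?_⟩
  · simpa using f.injective hab
  · obtain ⟨a, -, rfl⟩ := mem_map.mp hx
    obtain ⟨b, -, rfl⟩ := mem_map.mp hy
    exact f.toHom.map_adj (completeEquipartiteGraph_adj.mpr hij)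

theorem le_minDegree_of_card_nonNeighborsIn_le [Fintype W] [Nonempty W] {R : SimpleGraph W}
    [DecidableRel R.Adj] {k L C : ℕ} (hk : k ≠ 0) (hW : k * L ≤ Fintype.card W)
    (hmiss : ∀ v, #(nonNeighborsIn R univ v) ≤ L + C) :
    (1 - 1 / k) * Fintype.card W - C ≤ (R.minDegree : ℝ) := by
  have hdeg : Fintype.card W - (L + C) ≤ R.minDegree :=
    R.le_minDegree_of_forall_le_degree _ fun v ↦ by
      have := hmiss v
      have := card_nonNeighborsIn_univ_add_degree (R := R) v
      lia
  have hdeg : (Fintype.card W : ℝ) ≤ R.minDegree + (L + C) := by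
    exact_mod_cast Nat.sub_le_iff_le_add.mp hdeg
  have hL : (L : ℝ) ≤ 1 / k * Fintype.card W := by
    rw [one_div_mul_eq_div, le_div_iff₀' (by positivity)]
    exact_mod_cast hW
  linarith

theorem exists_pairwise_isCompleteBetween_of_card_nonNeighborsIn_le {k : ℕ} (hk : k ≠ 0)
    (s C : ℕ) :
    ∃ L₀, ∀ L ≥ L₀, ∀ N, k * L ≤ N → ∀ (R : SimpleGraph (Fin N)) [DecidableRel R.Adj],
      (∀ v, #(nonNeighborsIn R univ v) ≤ L + C) → ∃ A : Fin k → Finset (Fin N),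
        (∀ i, #(A i) = s) ∧ Pairwise fun i j ↦ R.IsCompleteBetween (A i) (A j) := by
  obtain ⟨r, rfl⟩ := Nat.exists_eq_succ_of_ne_zero hk
  obtain rfl | hr := eq_or_ne r 0
  · refine ⟨s, fun L hL N hN R _ _ ↦ ?_⟩
    obtain ⟨S, -, hS⟩ := exists_subset_card_eq (s := (univ : Finset (Fin N))) (n := s)
      (by rw [card_univ, Fintype.card_fin]; lia)
    exact ⟨fun _ ↦ S, fun _ ↦ hS, Subsingleton.pairwise⟩
  let ε : ℝ := (1 / r - 1 / (r + 1)) / 2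
  have hε : 0 < ε := half_pos (sub_pos.mpr
    (one_div_lt_one_div_of_lt (by positivity) (lt_add_one (r : ℝ))))
  obtain ⟨N₀, hN₀⟩ := Filter.eventually_atTop.mp
    (eventually_completeEquipartiteGraph_isContained_of_minDegree hε r s)
  refine ⟨max (max N₀ 1) ⌈C / ε⌉₊, fun L hL N hN R _ hmiss ↦ ?_⟩
  have hLN : L ≤ N := (Nat.le_mul_of_pos_left L r.succ_pos).trans hN
  have hCN : C ≤ ε * N := (div_le_iff₀' hε).mp (Nat.ceil_le.mp (by lia))
  have : NeZero N := ⟨by lia⟩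
  have hdeg := le_minDegree_of_card_nonNeighborsIn_le hk (by simpa using hN) hmiss
  rw [Fintype.card_fin, Nat.succ_eq_add_one, Nat.cast_add_one] at hdeg
  refine exists_pairwise_isCompleteBetween_of_isContained (hN₀ N (by lia) ?_)
  calc (1 - 1 / r + ε) * N = (1 - 1 / (r + 1)) * N - ε * N := by ring
    _ ≤ (1 - 1 / (r + 1)) * N - C := sub_le_sub_left hCN _
    _ ≤ R.minDegree := hdeg

/-! ### Multipartite graphs with an additional edge -/

/-- `R` contains no complete multipartite graph with parts of size at least `m`, indexed by `ι`,
together with an additional edge inside one of the parts. This is the only consequence of being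
`G`-free, for `G` edge-critical, that the stability argument uses. -/
def PartitePlusEdgeFree (R : SimpleGraph W) (ι : Type*) (m : ℕ) : Prop :=
  ∀ T : ι → Finset W, (∀ i, m ≤ #(T i)) →
    (Pairwise fun i j ↦ R.IsCompleteBetween (T i) (T j)) → ∀ i, R.IsIndepSet (T i)

theorem EdgeCritical.exists_coloring {G : SimpleGraph V} (hG : EdgeCritical G) {k : ℕ}
    (hchi : G.chromaticNumber = (k + 1 : ℕ)) :
    ∃ u v, G.Adj u v ∧ ∃ C : (G.deleteEdges {s(u, v)}).Coloring (Fin k), C u = C v := by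
  obtain ⟨u, v, huv, hdel⟩ := hG
  have hdel : (G.deleteEdges {s(u, v)}).chromaticNumber = k := by
    rw [hchi, Nat.cast_add, Nat.cast_one] at hdel
    exact WithTop.add_right_cancel ENat.one_ne_top hdel
  obtain ⟨C⟩ := chromaticNumber_le_iff_colorable.mp hdel.le
  refine ⟨u, v, huv, C, ?_⟩
  by_contra hne
  have hcol : G.Colorable k := ⟨Coloring.mk C fun {a b} hab ↦ by
    by_cases h : s(a, b) = s(u, v)
    · obtain ⟨rfl, rfl⟩ | ⟨rfl, rfl⟩ := Sym2.eq_iff.mp h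
      exacts [hne, Ne.symm hne]
    · exact C.valid (deleteEdges_adj.mpr ⟨hab, h⟩)⟩
  rw [← chromaticNumber_le_iff_colorable, hchi, Nat.cast_le] at hcol
  lia

theorem exists_embedding_apply_eq [Fintype V] {u v : V} (huv : u ≠ v) {T : Finset W}
    (hT : Fintype.card V ≤ #T) {x y : T} (hxy : x ≠ y) : ∃ φ : V ↪ T, φ u = x ∧ φ v = y := by
  classical
  obtain ⟨ψ⟩ : Nonempty (V ↪ T) := Function.Embedding.nonempty_of_card_le (by simpa using hT)
  exact ⟨(ψ.setValue u x).setValue v y, by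
    rw [Function.Embedding.setValue_eq_of_ne] <;> simp [huv, hxy], by simp⟩

theorem partitePlusEdgeFree_of_not_containsCopy [Fintype V] {G : SimpleGraph V}
    {R : SimpleGraph W} (hG : ¬containsCopy R G) {u v : V} (huv : G.Adj u v)
    (C : (G.deleteEdges {s(u, v)}).Coloring ι) (hC : C u = C v) :
    PartitePlusEdgeFree R ι (Fintype.card V) := by
  classical
  intro T hT hcomplete i x hx y hy hne hxy
  -- Permuting the parts, we may assume that the additional edge lies in the part of `u` and `v`.
  let σ : Equiv.Perm ι := Equiv.swap (C u) i
  have hσ : σ (C u) = i := Equiv.swap_apply_left _ _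
  have hφ (j : ι) : ∃ φ : V ↪ T (σ j), j = C u → (φ u : W) = x ∧ (φ v : W) = y := by
    by_cases hj : j = C u
    · subst hj
      obtain ⟨φ, hu, hv⟩ := exists_embedding_apply_eq huv.ne (hT _)
        (x := ⟨x, hσ.symm ▸ hx⟩) (y := ⟨y, hσ.symm ▸ hy⟩) (by simpa using hne)
      exact ⟨φ, fun _ ↦ by simp [hu, hv]⟩
    · obtain ⟨φ⟩ : Nonempty (V ↪ T (σ j)) :=
        Function.Embedding.nonempty_of_card_le (by simpa using hT (σ j))
      exact ⟨φ, fun h ↦ absurd h hj⟩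
  choose φ hφ using hφ
  let f (a : V) : W := φ (C a) a
  have hfu : f u = x := (hφ (C u) rfl).1
  have hfv : f v = y := (hφ (C v) hC.symm).2
  have hf_eq {a : V} {j : ι} (ha : C a = j) : (φ j a : W) = f a := by
    subst ha
    rfl
  have hf_adj {a b : V} (hab : C a ≠ C b) : R.Adj (f a) (f b) :=
    hcomplete (σ.injective.ne hab) (φ _ a).2 (φ _ b).2
  refine hG ⟨⟨f, fun {a b} hab ↦ ?_⟩, fun a b hab ↦ ?_⟩
  · by_cases h : s(a, b) = s(u, v)
    · obtain ⟨rfl, rfl⟩ | ⟨rfl, rfl⟩ := Sym2.eq_iff.mp h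
      · rwa [hfu, hfv]
      · rw [hfu, hfv]
        exact hxy.symm
    · exact hf_adj (C.valid (deleteEdges_adj.mpr ⟨hab, h⟩))
  · have hCab : C a = C b := by
      by_contra h
      exact (hf_adj h).ne hab
    exact (φ (C b)).injective (Subtype.ext ((hf_eq hCab).trans hab))

namespace PartitePlusEdgeFree

variable {R : SimpleGraph W} {A : ι → Finset W} {e f m : ℕ}

theorem isIndepSet_union (hR : PartitePlusEdgeFree R ι m) {T : ι → Finset W}
    (hT : ∀ i, m ≤ #(T i)) (hcomplete : Pairwise fun i j ↦ R.IsCompleteBetween (T i) (T j))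
    {i : ι} {X : Finset W} (hX : ∀ j ≠ i, R.IsCompleteBetween X (T j)) :
    R.IsIndepSet (X ∪ T i : Set W) := by
  classical
  have hunion {j : ι} (hj : j ≠ i) : R.IsCompleteBetween (X ∪ T i : Set W) (T j) :=
    fun v hv w hw ↦ hv.elim (fun hv ↦ hX j hj hv hw) fun hv ↦ hcomplete hj.symm hv hw
  have hpart := hR (Function.update T i (X ∪ T i)) (fun j ↦ ?_) (fun j l hjl ↦ ?_) i
  · simpa using hpart
  · obtain rfl | hj := eq_or_ne j i
    · simpa using (hT j).trans (card_le_card subset_union_right)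
    · simpa [hj] using hT j
  · obtain rfl | hj := eq_or_ne j i
    · simpa [hjl.symm] using hunion hjl.symm
    · obtain rfl | hl := eq_or_ne l i
      · simpa [hj] using (hunion hj).symm
      · simpa [hj, hl] using hcomplete hjl

variable [Fintype ι] [DecidableRel R.Adj]

theorem exists_card_lt_card_nonNeighborsIn_add [Nonempty ι] (hR : PartitePlusEdgeFree R ι m)
    (hm : m ≠ 0) (hA : AlmostComplete R e A) (v : W) :
    ∃ i, #(A i) < #(nonNeighborsIn R (A i) v) + (Fintype.card ι * m * e + m) := by
  by_contra! hcard
  choose S hSA hS hvS using fun i ↦ exists_subset_isCompleteBetween (R := R) (X := {v})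
    (A := A i) (e := #(nonNeighborsIn R (A i) v)) (by simp) (by simpa using hcard i)
  obtain ⟨T, hT, hcomplete⟩ := (hA.mono hSA).exists_isCompleteBetween fun i ↦ (hS i).ge
  have hvT (i : ι) : R.IsCompleteBetween ({v} : Finset W) (T i) :=
    fun x hx w hw ↦ hvS i hx ((hT i).1 hw)
  let i : ι := Classical.arbitrary ι
  obtain ⟨y, hy⟩ : (T i).Nonempty := card_ne_zero.mp ((hT i).2.trans_ne hm)
  have hvy : R.Adj v y := hvT i (by simp) hy
  exact hR.isIndepSet_union (fun i ↦ (hT i).2.ge) hcomplete (fun j _ ↦ hvT j)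
    (.inl (by simp)) (.inr hy) hvy.ne hvy

theorem not_adj_of_card_nonNeighborsIn_le (hR : PartitePlusEdgeFree R ι m)
    (hA : AlmostComplete R e A) (hcard : ∀ i, 2 * f + (Fintype.card ι * m * e + m) ≤ #(A i))
    {i : ι} {x y : W} (hx : ∀ j ≠ i, #(nonNeighborsIn R (A j) x) ≤ f)
    (hy : ∀ j ≠ i, #(nonNeighborsIn R (A j) y) ≤ f) : ¬R.Adj x y := by
  classical
  have hS (j : ι) : ∃ S ⊆ A j, Fintype.card ι * m * e + m ≤ #S ∧
      (j ≠ i → R.IsCompleteBetween ({x, y} : Finset W) S) := by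
    by_cases hj : j = i
    · exact ⟨A j, Subset.rfl, by have := hcard j; lia, fun h ↦ absurd hj h⟩
    · obtain ⟨S, hSA, hS, hxyS⟩ := exists_subset_isCompleteBetween (R := R) (X := {x, y})
        (A := A j) (e := f) (m := Fintype.card ι * m * e + m) (by simpa using ⟨hx j hj, hy j hj⟩)
        ((Nat.add_le_add_right (Nat.mul_le_mul_right f card_le_two) _).trans (hcard j))
      exact ⟨S, hSA, hS.ge, fun _ ↦ hxyS⟩
  choose S hSA hS hxyS using hS
  obtain ⟨T, hT, hcomplete⟩ := (hA.mono hSA).exists_isCompleteBetween hS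
  have hindep := hR.isIndepSet_union (fun i ↦ (hT i).2.ge) hcomplete
    fun j hj x hx w hw ↦ hxyS j hj hx ((hT j).1 hw)
  exact fun hxy ↦ hindep (.inl (by simp)) (.inl (by simp)) hxy.ne hxy

/-! ### Stability -/

variable [Fintype W] [Nonempty ι] {L C : ℕ}

theorem exists_coloring_off_small_set (hR : PartitePlusEdgeFree R ι m) (hm : m ≠ 0) {q : ℕ}
    (hW : Fintype.card ι * L ≤ Fintype.card W) (hmiss : ∀ v, #(nonNeighborsIn R univ v) ≤ L + C)
    (hA : ∀ i, #(A i) = 2 * q + m)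
    (hcomplete : Pairwise fun i j ↦ R.IsCompleteBetween (A i) (A j)) :
    ∃ (c : W → ι) (bad : Finset W), (∀ x ∉ bad, ∀ y ∉ bad, R.Adj x y → c x ≠ c y) ∧
      q * #bad ≤ Fintype.card ι * m * L + Fintype.card ι * (2 * q + m) * C := by
  classical
  have hA₀ := AlmostComplete.of_pairwise_isCompleteBetween hcomplete
  have hsome (v : W) : ∃ i, 2 * q ≤ #(nonNeighborsIn R (A i) v) := by
    obtain ⟨i, hi⟩ := hR.exists_card_lt_card_nonNeighborsIn_add hm hA₀ v
    rw [hA i] at hi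
    exact ⟨i, by lia⟩
  choose c hc using hsome
  let bad : Finset W := {v | ∃ j ≠ c v, q < #(nonNeighborsIn R (A j) v)}
  have hgood {v : W} (hv : v ∉ bad) : ∀ j ≠ c v, #(nonNeighborsIn R (A j) v) ≤ q := by
    simpa [bad] using hv
  refine ⟨c, bad, fun x hx y hy hxy hcxy ↦ ?_, ?_⟩
  · exact hR.not_adj_of_card_nonNeighborsIn_le hA₀ (fun i ↦ by simp [hA i]) (hgood hx)
      (hcxy ▸ hgood hy) hxy
  -- Count the missing pairs between `W` and the parts: each vertex accounts for `2 * q` of them and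
  -- each bad vertex for `q` more, while `hmiss` allows few beyond `2 * q` per vertex on average.
  have hlower (v : W) : 2 * q + (if v ∈ bad then q else 0) ≤
      ∑ i, #(nonNeighborsIn R (A i) v) := by
    rw [← add_sum_erase _ _ (mem_univ (c v))]
    refine Nat.add_le_add (hc v) ?_
    split_ifs with hv
    · obtain ⟨j, hj, hqj⟩ : ∃ j ≠ c v, q < #(nonNeighborsIn R (A j) v) := by
        simpa [bad] using hv
      exact hqj.le.trans (single_le_sum (f := fun j ↦ #(nonNeighborsIn R (A j) v))
        (fun _ _ ↦ Nat.zero_le _) (mem_erase.mpr ⟨hj, mem_univ j⟩))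
    · exact Nat.zero_le _
  have hcount : Fintype.card W * (2 * q) + #bad * q ≤
      Fintype.card ι * ((2 * q + m) * (L + C)) :=
    calc Fintype.card W * (2 * q) + #bad * q
        = ∑ v, (2 * q + if v ∈ bad then q else 0) := by simp [sum_add_distrib]
      _ ≤ ∑ v, ∑ i, #(nonNeighborsIn R (A i) v) := sum_le_sum fun v _ ↦ hlower v
      _ = ∑ i, ∑ w ∈ A i, #(nonNeighborsIn R univ w) := by
        rw [sum_comm]
        exact sum_congr rfl fun i _ ↦ sum_card_nonNeighborsIn_comm (A i)
      _ ≤ ∑ _i : ι, (2 * q + m) * (L + C) := sum_le_sum fun i _ ↦ by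
        simpa [hA i] using sum_le_card_nsmul (A i) _ _ fun w _ ↦ hmiss w
      _ = Fintype.card ι * ((2 * q + m) * (L + C)) := by simp
  have := Nat.mul_le_mul_right (2 * q) hW
  linarith

theorem colorable_of_almostComplete (hR : PartitePlusEdgeFree R ι m) (hm : m ≠ 0) {d : ℕ}
    (hA : AlmostComplete R e A) (hdisj : Pairwise fun i j ↦ Disjoint (A i) (A j))
    (hmiss : ∀ v, #(nonNeighborsIn R univ v) ≤ d) (hd : ∀ i, d ≤ #(A i) + e)
    (hcard : ∀ i, 2 * e + 3 * (Fintype.card ι * m * e + m) ≤ #(A i)) :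
    R.Colorable (Fintype.card ι) := by
  classical
  choose c hc using hR.exists_card_lt_card_nonNeighborsIn_add hm hA
  have hpair (v : W) {i j : ι} (hij : i ≠ j) :
      #(nonNeighborsIn R (A i) v) + #(nonNeighborsIn R (A j) v) ≤ d := by
    rw [← card_union_of_disjoint
      ((hdisj hij).mono (nonNeighborsIn_subset _ _) (nonNeighborsIn_subset _ _))]
    exact (card_le_card (union_subset (nonNeighborsIn_mono (subset_univ _) v)
      (nonNeighborsIn_mono (subset_univ _) v))).trans (hmiss v)
  have hother (v : W) : ∀ j ≠ c v,
      #(nonNeighborsIn R (A j) v) ≤ e + (Fintype.card ι * m * e + m) := fun j hj ↦ by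
    have := hpair v hj.symm
    have := hc v
    have := hd (c v)
    lia
  refine (Coloring.mk c fun {x y} hxy hcxy ↦ ?_).colorable
  refine hR.not_adj_of_card_nonNeighborsIn_le hA (fun i ↦ ?_) (hother x) (hcxy ▸ hother y) hxy
  have := hcard i
  lia

theorem colorable_of_coloring_off_small_set (hR : PartitePlusEdgeFree R ι m) (hm : m ≠ 0)
    (hW : Fintype.card ι * L ≤ Fintype.card W) (hmiss : ∀ v, #(nonNeighborsIn R univ v) ≤ L + C)
    {c : W → ι} {bad : Finset W} (hc : ∀ x ∉ bad, ∀ y ∉ bad, R.Adj x y → c x ≠ c y)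
    (he : #bad + Fintype.card ι * C ≤ e) (hL : 3 * (e + (Fintype.card ι * m * e + m)) ≤ L) :
    R.Colorable (Fintype.card ι) := by
  classical
  let B (i : ι) : Finset W := {v ∈ badᶜ | c v = i}
  have hB {i : ι} {v : W} : v ∈ B i ↔ v ∉ bad ∧ c v = i := by simp [B]
  have hdisj : Pairwise fun i j ↦ Disjoint (B i) (B j) := fun i j hij ↦
    disjoint_left.mpr fun v hi hj ↦ hij ((hB.mp hi).2.symm.trans (hB.mp hj).2)
  have hindep (i : ι) : R.IsIndepSet (B i) := fun v hv w hw _ hvw ↦ by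
    obtain ⟨hv, hcv⟩ := hB.mp hv
    obtain ⟨hw, hcw⟩ := hB.mp hw
    exact hc v hv w hw hvw (hcv.trans hcw.symm)
  have hupper (i : ι) : #(B i) ≤ L + C := by
    obtain h | ⟨v, hv⟩ := (B i).eq_empty_or_nonempty
    · simp [h]
    · exact (Nat.le_add_left _ _).trans
        ((card_nonNeighborsIn_add_card_le (hindep i) (disjoint_empty_right _) hv).trans (hmiss v))
  have hlower (i : ι) : L + C ≤ #(B i) + e := by
    have hcover : #bad + ∑ j, #(B j) = Fintype.card W := by
      rw [← card_eq_sum_card_fiberwise fun v _ ↦ mem_univ (c v), card_add_card_compl]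
    have hrest : ∑ j ∈ univ.erase i, #(B j) ≤ (Fintype.card ι - 1) * (L + C) := by
      simpa using sum_le_card_nsmul (univ.erase i) _ _ fun j _ ↦ hupper j
    obtain ⟨r, hr⟩ := Nat.exists_eq_succ_of_ne_zero (Fintype.card_ne_zero (α := ι))
    rw [← add_sum_erase _ _ (mem_univ i)] at hcover
    rw [hr] at hrest hW he
    simp only [Nat.succ_eq_add_one, Nat.add_sub_cancel] at hrest hW he
    linarith
  refine hR.colorable_of_almostComplete hm (fun i j hij v hv ↦ ?_) hdisj hmiss hlower fun i ↦ ?_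
  · have := card_nonNeighborsIn_add_card_le (hindep i) (hdisj hij) hv
    have := hmiss v
    have := hlower i
    lia
  · have := hlower i
    lia

end PartitePlusEdgeFree

theorem PartitePlusEdgeFree.exists_forall_ge_colorable {k m : ℕ} (hk : k ≠ 0) (hm : m ≠ 0) (C : ℕ) :
    ∃ L₀, ∀ L ≥ L₀, ∀ N, k * L ≤ N → ∀ (R : SimpleGraph (Fin N)) [DecidableRel R.Adj],
      PartitePlusEdgeFree R (Fin k) m → (∀ v, #(nonNeighborsIn R univ v) ≤ L + C) →
        R.Colorable k := by
  have : NeZero k := ⟨hk⟩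
  -- This `q` bounds the exceptional set by `L / (6 * (1 + k * m))` up to a constant, so that even
  -- `k * m` times its size is a small part of a color class.
  let q := k * m * (6 * (1 + k * m))
  let D := k * (2 * q + m) * C
  obtain ⟨L₀, hL₀⟩ := exists_pairwise_isCompleteBetween_of_card_nonNeighborsIn_le hk (2 * q + m) C
  refine ⟨max L₀ (D + 6 * ((1 + k * m) * (k * C) + m)), fun L hL N hN R _ hR hmiss ↦ ?_⟩
  have hN : Fintype.card (Fin k) * L ≤ Fintype.card (Fin N) := by simpa using hN
  obtain ⟨A, hA, hcomplete⟩ := hL₀ L (by lia) N (by simpa using hN) R hmiss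
  obtain ⟨c, bad, hc, hbad⟩ := hR.exists_coloring_off_small_set hm hN hmiss hA hcomplete
  have hbad : 6 * (1 + k * m) * #bad ≤ L + D := by
    refine le_of_mul_le_mul_left ?_ (show 0 < k * m by positivity)
    calc k * m * (6 * (1 + k * m) * #bad) = q * #bad := by ring
      _ ≤ k * m * L + D := by simpa using hbad
      _ ≤ k * m * (L + D) := by
        rw [Nat.mul_add]
        exact Nat.add_le_add_left (Nat.le_mul_of_pos_left D (by positivity)) _
  have hcol := hR.colorable_of_coloring_off_small_set hm hN hmiss hc le_rfl (by
    rw [Fintype.card_fin]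
    have := (le_max_right _ _).trans hL
    linarith)
  simpa using hcol

theorem statement_1_general (k t : ℕ) {V : Type*} [Finite V] (G : SimpleGraph V)
    (hchi : G.chromaticNumber = (k + 1 : ℕ)) (hcrit : EdgeCritical G) :
    ∃ n₀ : ℕ, ∀ n : ℕ, n₀ ≤ n → arrows (k * n * t + 1) G (genFan n t) := by
  classical
  have := Fintype.ofFinite V
  obtain ⟨u, v, huv, c, hc⟩ := hcrit.exists_coloring hchi
  have hk : k ≠ 0 := (c u).pos.ne'
  have hV : Fintype.card V ≠ 0 := (Fintype.card_pos_iff.mpr ⟨u⟩).ne'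
  obtain ⟨L₀, hL₀⟩ := PartitePlusEdgeFree.exists_forall_ge_colorable hk hV
    ((Fintype.card V + t).choose (Fintype.card V))
  refine ⟨L₀, fun n hn R ↦ or_iff_not_imp_left.mpr fun hG ↦ by_contra fun hfan ↦ ?_⟩
  have hcol : R.Colorable k := by
    obtain rfl | ht := eq_or_ne t 0
    · exact R.colorable_of_fintype.mono (by rw [Fintype.card_fin]; lia)
    · have hnt : L₀ ≤ n * t := hn.trans (Nat.le_mul_of_pos_right n (by lia))
      exact hL₀ (n * t) hnt _ (by lia) R (partitePlusEdgeFree_of_not_containsCopy hG huv c hc)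
        (card_nonNeighborsIn_univ_le hG hfan)
  exact hfan (containsCopy_compl_of_colorable hcol (by simp [mul_assoc]))

end

theorem statement_1 (k t : ℕ) (hk : 2 ≤ k) (ht : 2 ≤ t)
    {V : Type*} [Fintype V] (G : SimpleGraph V)
    (hchi : G.chromaticNumber = (k + 1 : ℕ)) (hcrit : EdgeCritical G) :
    ∃ n₀ : ℕ, ∀ n : ℕ, n₀ ≤ n → arrows (k * n * t + 1) G (genFan n t) :=
  statement_1_general k t G hchi hcrit
end
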